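/- Let K ⊆ ℝ^d be a d-dimensional maximal lattice-free set. Then the recession cone rec(K) is a linear subspace of ℝ^d. -/

import Mathlib

open Pointwise

/-- The standard integer lattice `ℤ^d` viewed as a subset of `ℝ^d`. -/
def intLattice (d : ℕ) : Set (Fin d → ℝ) :=
  Set.range (fun z : Fin d → ℤ => fun i => (z i : ℝ))

/-- A set `K ⊆ ℝ^d` is lattice-free if it is closed, convex, and its interior
contains no point of `ℤ^d`. -/
def IsLatticeFree (d : ℕ) (K : Set (Fin d → ℝ)) : Prop :=
  IsClosed K ∧ Convex ℝ K ∧ interior K ∩ intLattice d = ∅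

/-- A lattice-free set is maximal if it is not properly contained in another
lattice-free set. -/
def IsMaxLatticeFree (d : ℕ) (K : Set (Fin d → ℝ)) : Prop :=
  IsLatticeFree d K ∧ ∀ K' : Set (Fin d → ℝ), IsLatticeFree d K' → K ⊆ K' → K' = K

/-- The recession cone of `K`: all vectors `u` with `K + u ⊆ K`. -/
def recCone (d : ℕ) (K : Set (Fin d → ℝ)) : Set (Fin d → ℝ) :=
  {u | ∀ x ∈ K, x + u ∈ K}

/-- A polyhedron: an intersection of finitely many closed halfspaces. -/
def IsPolyhedron (d : ℕ) (K : Set (Fin d → ℝ)) : Prop :=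
  ∃ (n : ℕ) (a : Fin n → (Fin d → ℝ)) (b : Fin n → ℝ),
    K = {x | ∀ i, ∑ j, a i j * x j ≤ b i}

/-- A polytope: the convex hull of finitely many points. -/
def IsPolytope (d : ℕ) (K : Set (Fin d → ℝ)) : Prop :=
  ∃ s : Finset (Fin d → ℝ), K = convexHull ℝ (s : Set (Fin d → ℝ))

/-- A facet of a `d`-dimensional convex set `K ⊆ ℝ^d`: a nonempty convex
(extreme) face of dimension `d - 1`. -/
def IsFacet (d : ℕ) (K F : Set (Fin d → ℝ)) : Prop :=
  F.Nonempty ∧ IsExtreme ℝ K F ∧ Convex ℝ F ∧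
    Module.finrank ℝ (affineSpan ℝ F).direction + 1 = d

/-- Simultaneous Diophantine approximation: some multiple `n • u` with `n ≥ N` is within `δ` of
an integer vector. -/
theorem exists_nat_smul_near_intLattice {d : ℕ} (u : Fin d → ℝ) (N : ℕ) {δ : ℝ} (hδ : 0 < δ) :
    ∃ n : ℕ, N ≤ n ∧ ∃ p : Fin d → ℤ, dist (fun i => (p i : ℝ)) ((n : ℝ) • u) < δ := by
  let f : ℕ → Fin d → ℝ := fun k i => Int.fract ((k : ℝ) * u i)
  have hf : ∀ k, f k ∈ Set.Icc (0 : Fin d → ℝ) 1 := fun k =>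
    ⟨fun i => Int.fract_nonneg _, fun i => (Int.fract_lt_one _).le⟩
  obtain ⟨a, -, φ, hφ, hlim⟩ := isCompact_Icc.tendsto_subseq hf
  obtain ⟨M, hM⟩ := Metric.cauchySeq_iff.1 hlim.cauchySeq δ hδ
  have hle : φ M + N ≤ φ (M + N) := by
    simpa only [add_comm] using hφ.add_le_nat N M
  refine ⟨φ (M + N) - φ M, by omega,
    fun i => ⌊(φ (M + N) : ℝ) * u i⌋ - ⌊(φ M : ℝ) * u i⌋, ?_⟩
  have h := hM M le_rfl (M + N) (Nat.le_add_right _ _)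
  rw [dist_pi_lt_iff hδ] at h ⊢
  intro i
  convert h i using 1
  simp only [Real.dist_eq, f, Function.comp_apply, Pi.smul_apply, smul_eq_mul, Int.fract]
  rw [Nat.cast_sub (by omega)]
  push_cast
  congr 1
  ring

theorem add_nat_smul_mem_of_mem_recCone {d : ℕ} {K : Set (Fin d → ℝ)} {u : Fin d → ℝ}
    (hu : u ∈ recCone d K) (n : ℕ) {x : Fin d → ℝ} (hx : x ∈ K) : x + (n : ℝ) • u ∈ K := by
  induction n with
  | zero => simpa using hx
  | succ n ih =>
    have h := hu _ ih
    rwa [Nat.cast_succ, add_smul, one_smul, ← add_assoc]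

theorem smul_mem_recCone {d : ℕ} {K : Set (Fin d → ℝ)} (hconv : Convex ℝ K) {u : Fin d → ℝ}
    (hu : u ∈ recCone d K) {t : ℝ} (ht : 0 ≤ t) : t • u ∈ recCone d K := by
  intro x hx
  obtain ⟨n, hn⟩ := exists_nat_gt t
  have hn0 : (0 : ℝ) < n := ht.trans_lt hn
  have h := hconv.add_smul_mem hx (add_nat_smul_mem_of_mem_recCone hu n hx)
    (t := t / n) ⟨by positivity, (div_le_one hn0).2 hn.le⟩
  rwa [smul_smul, div_mul_cancel₀ _ hn0.ne'] at h

theorem recCone_subset_recCone_interior {d : ℕ} (K : Set (Fin d → ℝ)) :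
    recCone d K ⊆ recCone d (interior K) := by
  intro u hu x hx
  have hsub : (fun y => y + u) '' interior K ⊆ K := by
    rintro _ ⟨y, hy, rfl⟩
    exact hu y (interior_subset hy)
  exact interior_maximal hsub ((Homeomorph.addRight u).isOpenMap _ isOpen_interior)
    (Set.mem_image_of_mem _ hx)

/-- If the interior of `K` misses the lattice, so does its translate-sweep along the line spanned
by a recession direction. -/
theorem interior_add_span_disjoint_intLattice {d : ℕ} {K : Set (Fin d → ℝ)}
    (hK : IsLatticeFree d K) {u : Fin d → ℝ} (hu : u ∈ recCone d K) :
    (interior K + (Submodule.span ℝ {u} : Set (Fin d → ℝ))) ∩ intLattice d = ∅ := by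
  obtain ⟨-, hconv, hfree⟩ := hK
  rw [Set.eq_empty_iff_forall_notMem]
  rintro _ ⟨⟨w, hw, v, hv, hz⟩, z, rfl⟩
  obtain ⟨t, rfl⟩ := Submodule.mem_span_singleton.1 hv
  obtain ⟨δ, hδ, hball⟩ := Metric.isOpen_iff.1 isOpen_interior w hw
  obtain ⟨N, hN⟩ := exists_nat_ge (-t)
  obtain ⟨n, hn, p, hp⟩ := exists_nat_smul_near_intLattice u N hδ
  have hnt : 0 ≤ t + n := by
    have : (N : ℝ) ≤ n := by exact_mod_cast hn
    linarith
  let e : Fin d → ℝ := (fun i => (p i : ℝ)) - (n : ℝ) • u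
  have hwe : w + e ∈ interior K := by
    apply hball
    rwa [Metric.mem_ball, dist_eq_norm, add_sub_cancel_left, ← dist_eq_norm]
  have hmem := recCone_subset_recCone_interior K (smul_mem_recCone hconv hu hnt) _ hwe
  refine Set.eq_empty_iff_forall_notMem.1 hfree _ ⟨hmem, z + p, ?_⟩
  funext i
  have hzi := congrFun hz i
  simp only [Pi.add_apply, Pi.smul_apply, smul_eq_mul, Pi.sub_apply, e] at hzi ⊢
  push_cast
  rw [← hzi]
  ring

theorem neg_mem_recCone {d : ℕ} {K : Set (Fin d → ℝ)} (hK : IsMaxLatticeFree d K)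
    (hne : (interior K).Nonempty) {u : Fin d → ℝ} (hu : u ∈ recCone d K) :
    -u ∈ recCone d K := by
  obtain ⟨hfree, hmax⟩ := hK
  have hconv := hfree.2.1
  let U : Set (Fin d → ℝ) := interior K + (Submodule.span ℝ {u} : Set (Fin d → ℝ))
  have hUopen : IsOpen U := isOpen_interior.add_right
  have hUconv : Convex ℝ U := hconv.interior.add (Submodule.convex _)
  have hsub : interior K ⊆ U := fun x hx => ⟨x, hx, 0, Submodule.zero_mem _, add_zero x⟩
  have hUne : (interior U).Nonempty := by
    rw [hUopen.interior_eq]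
    exact hne.mono hsub
  have hKU : K ⊆ closure U := by
    refine subset_closure.trans ?_
    rw [← hconv.closure_interior_eq_closure_of_nonempty_interior hne]
    exact closure_mono hsub
  have hUfree : IsLatticeFree d (closure U) := by
    refine ⟨isClosed_closure, hUconv.closure, ?_⟩
    rw [hUconv.interior_closure_eq_interior_of_nonempty_interior hUne, hUopen.interior_eq]
    exact interior_add_span_disjoint_intLattice hfree hu
  have heq := hmax _ hUfree hKU
  intro x hx
  rw [← heq]
  refine map_mem_closure (f := fun y => y + -u) (by fun_prop) (hKU hx) ?_
  rintro _ ⟨w, hw, v, hv, rfl⟩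
  exact ⟨w, hw, v + -u,
    Submodule.add_mem _ hv (Submodule.neg_mem _ (Submodule.mem_span_singleton_self u)),
    (add_assoc _ _ _).symm⟩

/-- The recession cone of a `d`-dimensional maximal lattice-free
set in `ℝ^d` is a linear subspace. -/
theorem stmt_9 (d : ℕ) (K : Set (Fin d → ℝ))
    (hK : IsMaxLatticeFree d K) (hdim : affineSpan ℝ K = ⊤) :
    ∃ S : Submodule ℝ (Fin d → ℝ), recCone d K = (S : Set (Fin d → ℝ)) := by
  have hconv := hK.1.2.1
  have hne : (interior K).Nonempty := hconv.interior_nonempty_iff_affineSpan_eq_top.2 hdim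
  refine ⟨{ carrier := recCone d K, add_mem' := ?_, zero_mem' := ?_, smul_mem' := ?_ }, rfl⟩
  · intro u v hu hv x hx
    rw [← add_assoc]
    exact hv _ (hu _ hx)
  · intro x hx
    rwa [add_zero]
  · intro t u hu
    rcases le_total 0 t with ht | ht
    · exact smul_mem_recCone hconv hu ht
    · rw [← neg_smul_neg]
      exact smul_mem_recCone hconv (neg_mem_recCone hK hne hu) (neg_nonneg.2 ht)
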